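/- arXiv:1411.4369 — 3 statements merged into one kernel-verified Lean document; each statement's English description precedes it below -/
import Mathlib

section
/- Let N = (B, L, p⁻, p⁺, g⁺) be an LDC network in which generators and loads are on distinct buses, i.e. for every bus v, g⁺(v) > 0 implies p⁺(v) = 0 and p⁺(v) > 0 implies g⁺(v) = 0. Define N' = (B, L, p⁻', p⁺, g⁺', c') by: p⁻'(v) := p⁺(v) for all v ∈ B; for every bus v with p⁺(v) > 0, g⁺'(v) := p⁺(v) − p⁻(v) and c'(v) := 1; for all other buses, g⁺'(v) := g⁺(v) and c'(v) := 0. Then Σ_{v ∈ B} p⁺(v) − MSF(N) = OTS(N'). -/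
open scoped BigOperators ENNReal Classical

/-- A Linear DC (LDC) power network on the finite bus type `V`.
`adj a b` states that there is a line between buses `a` and `b` (it is meant to be
symmetric); `cap`/`sus` give the capacity and susceptance of that line; `pmin`/`pmax`
are the minimum/maximum demand, `gmax` is the maximum generation (`⊤` meaning
unbounded) and `cost` is the generation cost. -/
structure LDCNetwork (V : Type*) [Fintype V] where
  adj : V → V → Prop
  cap : V → V → ℝ
  sus : V → V → ℝ
  pmin : V → ℝ
  pmax : V → ℝ≥0∞
  gmax : V → ℝ≥0∞
  cost : V → ℝ

/-- A candidate switching solution: the set of switched-off lines (as a relation on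
buses), the phase angles `theta`, the generation `gen` and the served demand `dem`. -/
structure LDCSolution (V : Type*) [Fintype V] where
  switched : V → V → Prop
  theta : V → ℝ
  gen : V → ℝ
  dem : V → ℝ

/-- Feasibility of a switching solution `S` for the network `N`: switched-off lines are
lines of the network and switching is symmetric; the flow `sus·(θ a - θ b)` of every
non-switched line is within its capacity; the demand and generation bounds hold; and
Kirchhoff's conservation law holds at every bus. -/
def LDCSolution.IsFeasible {V : Type*} [Fintype V] (S : LDCSolution V)
    (N : LDCNetwork V) : Prop :=
  (∀ a b, S.switched a b → N.adj a b) ∧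
  (∀ a b, S.switched a b → S.switched b a) ∧
  (∀ a b, N.adj a b → ¬ S.switched a b →
      |N.sus a b * (S.theta a - S.theta b)| ≤ N.cap a b) ∧
  (∀ v, N.pmin v ≤ S.dem v ∧ 0 ≤ S.dem v ∧ ENNReal.ofReal (S.dem v) ≤ N.pmax v) ∧
  (∀ v, 0 ≤ S.gen v ∧ ENNReal.ofReal (S.gen v) ≤ N.gmax v) ∧
  (∀ v, (∑ b : V, if N.adj v b ∧ ¬ S.switched v b
          then N.sus v b * (S.theta v - S.theta b) else 0) = S.gen v - S.dem v)

/-- The network `N'` obtained from `N` (whose maximum demand is given by the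
real-valued function `pb`): the minimum demand is fixed to the maximum demand `pb`,
and every load bus additionally gets a generator of cost `1` and maximum generation
`p⁺(v) - p⁻(v)`; all other generators have cost `0`. -/
noncomputable def otsEncoding {V : Type*} [Fintype V] (N : LDCNetwork V) (pb : V → ℝ) :
    LDCNetwork V where
  adj := N.adj
  cap := N.cap
  sus := N.sus
  pmin := pb
  pmax := N.pmax
  gmax := fun v => if 0 < pb v then ENNReal.ofReal (pb v - N.pmin v) else N.gmax v
  cost := fun v => if 0 < pb v then 1 else 0

/-!
Generating an extra amount `r v` at a bus `v` and consuming it on the spot changes neither the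
flows nor the balance at `v`. Starting from a feasible solution of `N`, local generation of the
unserved demand `p⁺ - d` yields a feasible solution of `N'` of cost `∑ p⁺ - ∑ d`; starting from a
feasible solution of `N'`, removing the generation at load buses together with the demand it covers
yields a feasible solution of `N`. Hence the costs attainable in `N'` are exactly the values
`∑ p⁺ - s` with `s` a total demand attainable in `N`.
-/

namespace LDCNetwork

variable {V : Type*} [Fintype V]

/-- The total demands served by the feasible switching solutions of `N`; the maximum switching flow
is the greatest element. -/
def servedDemands (N : LDCNetwork V) : Set ℝ :=
  {s | ∃ S : LDCSolution V, S.IsFeasible N ∧ s = ∑ v, S.dem v}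

/-- The generation costs of the feasible switching solutions of `N`; the optimal transmission
switching cost is the least element. -/
def generationCosts (N : LDCNetwork V) : Set ℝ :=
  {c | ∃ S : LDCSolution V, S.IsFeasible N ∧ c = ∑ v, N.cost v * S.gen v}

end LDCNetwork

namespace LDCSolution

variable {V : Type*} [Fintype V] {N N' : LDCNetwork V} {S : LDCSolution V} {pb : V → ℝ} {v : V}

/-- The solution in which each bus `v` generates and consumes an additional amount `r v`, leaving
the switching and the phase angles unchanged. Negative values of `r` reduce both quantities. -/
def addLocalSupply (S : LDCSolution V) (r : V → ℝ) : LDCSolution V where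
  switched := S.switched
  theta := S.theta
  gen := S.gen + r
  dem := S.dem + r

namespace IsFeasible

theorem pmin_le_dem (hS : S.IsFeasible N) (v : V) : N.pmin v ≤ S.dem v :=
  (hS.2.2.2.1 v).1

theorem dem_nonneg (hS : S.IsFeasible N) (v : V) : 0 ≤ S.dem v :=
  (hS.2.2.2.1 v).2.1

theorem ofReal_dem_le_pmax (hS : S.IsFeasible N) (v : V) : ENNReal.ofReal (S.dem v) ≤ N.pmax v :=
  (hS.2.2.2.1 v).2.2

theorem gen_nonneg (hS : S.IsFeasible N) (v : V) : 0 ≤ S.gen v :=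
  (hS.2.2.2.2.1 v).1

theorem ofReal_gen_le_gmax (hS : S.IsFeasible N) (v : V) : ENNReal.ofReal (S.gen v) ≤ N.gmax v :=
  (hS.2.2.2.2.1 v).2

theorem dem_le_of_pmax_eq_ofReal (hS : S.IsFeasible N) (hpb : 0 ≤ pb v)
    (hpmax : N.pmax v = ENNReal.ofReal (pb v)) : S.dem v ≤ pb v :=
  (ENNReal.ofReal_le_ofReal_iff hpb).1 (hpmax ▸ hS.ofReal_dem_le_pmax v)

theorem gen_eq_zero_of_gmax_eq_zero (hS : S.IsFeasible N) (hgmax : N.gmax v = 0) : S.gen v = 0 :=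
  have gen_nonpos : S.gen v ≤ 0 :=
    ENNReal.ofReal_eq_zero.1 (nonpos_iff_eq_zero.1 (hgmax ▸ hS.ofReal_gen_le_gmax v))
  gen_nonpos.antisymm (hS.gen_nonneg v)

theorem addLocalSupply {r : V → ℝ} (hS : S.IsFeasible N)
    (hadj : N'.adj = N.adj) (hcap : N'.cap = N.cap) (hsus : N'.sus = N.sus)
    (hdem : ∀ v, N'.pmin v ≤ S.dem v + r v ∧ 0 ≤ S.dem v + r v ∧
      ENNReal.ofReal (S.dem v + r v) ≤ N'.pmax v)
    (hgen : ∀ v, 0 ≤ S.gen v + r v ∧ ENNReal.ofReal (S.gen v + r v) ≤ N'.gmax v) :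
    (S.addLocalSupply r).IsFeasible N' := by
  obtain ⟨switched_adj, switched_symm, flow_le_cap, -, -, conservation⟩ := hS
  unfold IsFeasible
  rw [hadj, hcap, hsus]
  exact ⟨switched_adj, switched_symm, flow_le_cap, hdem, hgen,
    fun v => (conservation v).trans (add_sub_add_right_eq_sub _ _ _).symm⟩

theorem dem_eq_of_otsEncoding (hS : S.IsFeasible (otsEncoding N pb)) (hpb : 0 ≤ pb v)
    (hpmax : N.pmax v = ENNReal.ofReal (pb v)) : S.dem v = pb v :=
  (hS.dem_le_of_pmax_eq_ofReal hpb hpmax).antisymm (hS.pmin_le_dem v)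

theorem otsEncoding_cost_mul_gen_nonneg (hS : S.IsFeasible (otsEncoding N pb)) (v : V) :
    0 ≤ (otsEncoding N pb).cost v * S.gen v :=
  mul_nonneg (by simp only [otsEncoding]; split_ifs <;> norm_num) (hS.gen_nonneg v)

theorem otsEncoding_cost_mul_gen_le (hS : S.IsFeasible (otsEncoding N pb)) (hle : N.pmin v ≤ pb v) :
    (otsEncoding N pb).cost v * S.gen v ≤ pb v - N.pmin v := by
  have gen_le_gmax := hS.ofReal_gen_le_gmax v
  by_cases hload : 0 < pb v
  · simp only [otsEncoding, if_pos hload] at gen_le_gmax ⊢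
    rwa [one_mul, ← ENNReal.ofReal_le_ofReal_iff (sub_nonneg.2 hle)]
  · simpa only [otsEncoding, if_neg hload, zero_mul] using sub_nonneg.2 hle

theorem addLocalSupply_otsEncoding (hS : S.IsFeasible N) (hpb : ∀ v, 0 ≤ pb v)
    (hpmax : ∀ v, N.pmax v = ENNReal.ofReal (pb v))
    (hsep : ∀ v, 0 < pb v → N.gmax v = 0) :
    (S.addLocalSupply (pb - S.dem)).IsFeasible (otsEncoding N pb) := by
  have dem_le (v : V) : S.dem v ≤ pb v := hS.dem_le_of_pmax_eq_ofReal (hpb v) (hpmax v)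
  refine hS.addLocalSupply rfl rfl rfl (fun v => ?_) (fun v => ?_)
  · rw [Pi.sub_apply, add_sub_cancel]
    exact ⟨le_rfl, hpb v, (hpmax v).ge⟩
  · refine ⟨add_nonneg (hS.gen_nonneg v) (sub_nonneg.2 (dem_le v)), ?_⟩
    by_cases hload : 0 < pb v
    · simp only [otsEncoding, if_pos hload, Pi.sub_apply,
        hS.gen_eq_zero_of_gmax_eq_zero (hsep v hload), zero_add]
      exact ENNReal.ofReal_le_ofReal (sub_le_sub_left (hS.pmin_le_dem v) _)
    · have unserved_eq_zero : pb v - S.dem v = 0 := by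
        linarith [hS.dem_nonneg v, dem_le v]
      simpa only [otsEncoding, if_neg hload, Pi.sub_apply, unserved_eq_zero, add_zero]
        using hS.ofReal_gen_le_gmax v

theorem otsEncoding_cost_mul_gen_addLocalSupply (hS : S.IsFeasible N) (hpb : 0 ≤ pb v)
    (hpmax : N.pmax v = ENNReal.ofReal (pb v)) (hsep : 0 < pb v → N.gmax v = 0) :
    (otsEncoding N pb).cost v * (S.addLocalSupply (pb - S.dem)).gen v = pb v - S.dem v := by
  simp only [otsEncoding, LDCSolution.addLocalSupply, Pi.add_apply, Pi.sub_apply]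
  split_ifs with hload
  · rw [hS.gen_eq_zero_of_gmax_eq_zero (hsep hload), zero_add, one_mul]
  · linarith [hS.dem_nonneg v, hS.dem_le_of_pmax_eq_ofReal hpb hpmax]

theorem addLocalSupply_of_otsEncoding (hS : S.IsFeasible (otsEncoding N pb))
    (hpb : ∀ v, 0 ≤ pb v) (hpmax : ∀ v, N.pmax v = ENNReal.ofReal (pb v))
    (hpmin : ∀ v, 0 ≤ N.pmin v) (hle : ∀ v, N.pmin v ≤ pb v) :
    (S.addLocalSupply (-((otsEncoding N pb).cost * S.gen))).IsFeasible N := by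
  refine hS.addLocalSupply rfl rfl rfl (fun v => ?_) (fun v => ?_)
  · have removed_nonneg := hS.otsEncoding_cost_mul_gen_nonneg v
    have pmin_le : N.pmin v ≤ pb v - (otsEncoding N pb).cost v * S.gen v :=
      le_sub_comm.1 (hS.otsEncoding_cost_mul_gen_le (hle v))
    rw [hS.dem_eq_of_otsEncoding (hpb v) (hpmax v), Pi.neg_apply, Pi.mul_apply, ← sub_eq_add_neg,
      hpmax v]
    exact ⟨pmin_le, (hpmin v).trans pmin_le,
      ENNReal.ofReal_le_ofReal (sub_le_self _ removed_nonneg)⟩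
  · have gen_nonneg := hS.gen_nonneg v
    have gen_le_gmax := hS.ofReal_gen_le_gmax v
    by_cases hload : 0 < pb v
    · simp [otsEncoding, hload]
    · simp only [otsEncoding, if_neg hload, Pi.neg_apply, Pi.mul_apply, zero_mul, neg_zero,
        add_zero] at gen_le_gmax ⊢
      exact ⟨gen_nonneg, gen_le_gmax⟩

end IsFeasible

end LDCSolution

section OtsEncoding

variable {V : Type*} [Fintype V] {N : LDCNetwork V} {pb : V → ℝ}

theorem generationCosts_otsEncoding (hpb : ∀ v, 0 ≤ pb v)
    (hpmax : ∀ v, N.pmax v = ENNReal.ofReal (pb v)) (hpmin : ∀ v, 0 ≤ N.pmin v)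
    (hle : ∀ v, N.pmin v ≤ pb v) (hsep : ∀ v, 0 < pb v → N.gmax v = 0) :
    (otsEncoding N pb).generationCosts = (fun s => ∑ v, pb v - s) '' N.servedDemands := by
  apply Set.Subset.antisymm
  · rintro _ ⟨S, hS, rfl⟩
    refine ⟨_, ⟨_, hS.addLocalSupply_of_otsEncoding hpb hpmax hpmin hle, rfl⟩, ?_⟩
    simp only [LDCSolution.addLocalSupply, Pi.add_apply, Pi.neg_apply, Pi.mul_apply,
      hS.dem_eq_of_otsEncoding (hpb _) (hpmax _), Finset.sum_add_distrib, Finset.sum_neg_distrib]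
    ring
  · rintro _ ⟨_, ⟨S, hS, rfl⟩, rfl⟩
    refine ⟨_, hS.addLocalSupply_otsEncoding hpb hpmax hsep, ?_⟩
    simp only [hS.otsEncoding_cost_mul_gen_addLocalSupply (hpb _) (hpmax _) (hsep _),
      Finset.sum_sub_distrib]

theorem total_demand_sub_msf_eq_ots_general (hpb : ∀ v, 0 ≤ pb v)
    (hpmax : ∀ v, N.pmax v = ENNReal.ofReal (pb v)) (hpmin : ∀ v, 0 ≤ N.pmin v)
    (hsep : ∀ v, 0 < pb v → N.gmax v = 0) {msf : ℝ} (hmsf : IsGreatest N.servedDemands msf) :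
    IsLeast (otsEncoding N pb).generationCosts (∑ v, pb v - msf) := by
  obtain ⟨S, hS, -⟩ := hmsf.1
  have pmin_le (v : V) : N.pmin v ≤ pb v :=
    (hS.pmin_le_dem v).trans (hS.dem_le_of_pmax_eq_ofReal (hpb v) (hpmax v))
  rw [generationCosts_otsEncoding hpb hpmax hpmin pmin_le hsep]
  exact Antitone.map_isGreatest (fun _ _ h => sub_le_sub_left h _) hmsf

end OtsEncoding

/-- For an LDC network `N` (with real-valued maximum demand `pb`) in
which generators and loads are on distinct buses, the maximum switching flow of `N`
and the optimal transmission switching cost of the modified network `N'` satisfy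
`∑ v, p⁺ v - MSF N = OTS N'`. -/
theorem total_demand_sub_msf_eq_ots
    (V : Type*) [Fintype V] (N : LDCNetwork V)
    (pb : V → ℝ) (hpb : ∀ v, 0 ≤ pb v)
    (hpmax : ∀ v, N.pmax v = ENNReal.ofReal (pb v))
    (hpmin : ∀ v, 0 ≤ N.pmin v)
    (hsep : ∀ v, (0 < N.gmax v → pb v = 0) ∧ (0 < pb v → N.gmax v = 0))
    (msf ots : ℝ)
    (hmsf : IsGreatest
      {s : ℝ | ∃ S : LDCSolution V, S.IsFeasible N ∧ s = ∑ v, S.dem v} msf)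
    (hots : IsLeast
      {c : ℝ | ∃ S : LDCSolution V, S.IsFeasible (otsEncoding N pb) ∧
        c = ∑ v, (otsEncoding N pb).cost v * S.gen v} ots) :
    (∑ v, pb v) - msf = ots := by
  exact (total_demand_sub_msf_eq_ots_general hpb hpmax hpmin (fun v => (hsep v).2) hmsf).unique hots
end

section
/- Let (X, Y, W, δ) be an instance of the minimum 3-dimensional assignment problem with pairwise disjoint finite sets X, Y, W of equal cardinality and cost function δ : X×Y×W → ℕ, and let ANet(X,Y,W,δ) be the associated LDC network. For every assignment A ⊆ X×Y×W there exists a feasible switching solution of ANet(X,Y,W,δ) whose total generation cost Σ_{v} c(v)·g(v) equals Σ_{t ∈ A} δ(t). In particular OTS(ANet(X,Y,W,δ)) ≤ M3DA(X,Y,W,δ). -/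
open scoped BigOperators ENNReal Classical

/-- Build an LDC network from a one-directional line specification:
`spec p q = some (c, s)` means that there is a line between buses `p` and `q`
with capacity `c` and susceptance `s`. -/
noncomputable def mkNet {V : Type*} [Fintype V] (spec : V → V → Option (ℝ × ℝ))
    (pmin : V → ℝ) (pmax gmax : V → ℝ≥0∞) (cost : V → ℝ) : LDCNetwork V where
  adj a b := (spec a b).isSome ∨ (spec b a).isSome
  cap a b := ((spec a b).map Prod.fst).getD (((spec b a).map Prod.fst).getD 0)
  sus a b := ((spec a b).map Prod.snd).getD (((spec b a).map Prod.snd).getD 0)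
  pmin := pmin
  pmax := pmax
  gmax := gmax
  cost := cost

/-- Membership of an element `r` of `R = X ∪ Y ∪ W` in a triple `t ∈ T = X × Y × W`. -/
def memTriple {X Y Z : Type*} : X ⊕ Y ⊕ Z → X × Y × Z → Prop
  | .inl x, (x', _, _) => x = x'
  | .inr (.inl y), (_, y', _) => y = y'
  | .inr (.inr z), (_, _, z') => z = z'

/-- An assignment for the 3-dimensional assignment instance: a set `A ⊆ T` of triples
such that every element of `R = X ∪ Y ∪ W` belongs to exactly one triple of `A`. -/
def IsAssignment {X Y Z : Type*} (A : Finset (X × Y × Z)) : Prop :=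
  ∀ r : X ⊕ Y ⊕ Z, ∃! t : X × Y × Z, t ∈ A ∧ memTriple r t

/-- Buses of the assignment network `ANet(X,Y,W,δ)`: the load `l`, a bus for every
`r ∈ R = X ∪ Y ∪ W`, and buses `t`, `t_g`, `t_d` for every triple `t ∈ T`. -/
inductive MBus (X Y Z : Type*) where
  | l : MBus X Y Z
  | r : X ⊕ Y ⊕ Z → MBus X Y Z
  | t : X × Y × Z → MBus X Y Z
  | tg : X × Y × Z → MBus X Y Z
  | td : X × Y × Z → MBus X Y Z
  deriving DecidableEq, Fintype

/-- The lines of `ANet(X,Y,W,δ)`: `({r,l}, 1, 1)` for each `r ∈ R`, and for each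
`t ∈ T` the lines `({t,t_g}, 3, 1)`, `({t,l}, 5, 1)`, `({t,t_d}, 3, 1)` together with
`({t_d,r}, 1, 1)` for each `r ∈ t`. -/
noncomputable def assignSpec (X Y Z : Type*) :
    MBus X Y Z → MBus X Y Z → Option (ℝ × ℝ) := fun p q =>
  match p, q with
  | .r _, .l => some (1, 1)
  | .t t, .tg t' => if t = t' then some (3, 1) else none
  | .t _, .l => some (5, 1)
  | .t t, .td t' => if t = t' then some (3, 1) else none
  | .td t, .r r => if memTriple r t then some (1, 1) else none
  | _, _ => none

/-- The assignment network `ANet(X,Y,W,δ)`: `g⁺(t) = 3` with cost `δ(t)/3` and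
`g⁺(t_g) = 5` with cost `0` for every `t ∈ T`, and `p⁻(l) = p⁺(l) = 3|T| + |R|`;
all other bounds are `0`. -/
noncomputable def assignNet (X Y Z : Type*) [Fintype X] [Fintype Y] [Fintype Z]
    (δ : X × Y × Z → ℕ) : LDCNetwork (MBus X Y Z) :=
  mkNet (assignSpec X Y Z)
    (fun p => match p with
      | .l => 3 * (Fintype.card (X × Y × Z) : ℝ) + (Fintype.card (X ⊕ Y ⊕ Z) : ℝ)
      | _ => 0)
    (fun p => match p with
      | .l => ENNReal.ofReal
          (3 * (Fintype.card (X × Y × Z) : ℝ) + (Fintype.card (X ⊕ Y ⊕ Z) : ℝ))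
      | _ => 0)
    (fun p => match p with
      | .t _ => (3 : ℝ≥0∞)
      | .tg _ => (5 : ℝ≥0∞)
      | _ => 0)
    (fun p => match p with
      | .t t => (δ t : ℝ) / 3
      | _ => 0)

/-!
Send a flow of `3/4` from every `r` to `l`, and a flow of `3` from `t_g` through `t` to `l` for
every triple `t`. A triple `t ∈ A` generates `3` further units: `3/4` of them join the flow from
`t` to `l`, and `9/4` pass through `t_d`, which feeds `3/4` to each of its three elements. The lines
`{t_d, r}` with `t ∉ A` are switched off, so `t_d` may sit at the angle of `t` without carrying
flow. Every `r` lies in exactly one triple of `A`, so it passes on what it receives, and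
`|R| = 3 |A|`, so `l` receives `3 |T| + 3 |A| = 3 |T| + |R|`.
-/

section GeneralNetwork

variable {V : Type*} [Fintype V] {S : LDCSolution V} {spec : V → V → Option (ℝ × ℝ)}
  {pmin : V → ℝ} {pmax gmax : V → ℝ≥0∞} {cost : V → ℝ}

/-- The flow from `a` to `b` along the line that `spec` declares in this direction; it is `0` if
that line is switched off, and also if `spec` declares no line from `a` to `b`, even when it
declares one from `b` to `a`. -/
noncomputable def LDCSolution.lineFlow (S : LDCSolution V) (spec : V → V → Option (ℝ × ℝ))
    (a b : V) : ℝ :=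
  if S.switched a b then 0
  else (spec a b).elim 0 fun line => line.2 * (S.theta a - S.theta b)

theorem LDCSolution.lineFlow_of_eq_some {a b : V} {c s : ℝ} (hline : spec a b = some (c, s))
    (hon : ¬ S.switched a b) : S.lineFlow spec a b = s * (S.theta a - S.theta b) := by
  simp [lineFlow, hline, hon]

theorem LDCSolution.lineFlow_of_eq_none {a b : V} (hline : spec a b = none) :
    S.lineFlow spec a b = 0 := by
  simp [lineFlow, hline]

theorem LDCSolution.lineFlow_of_switched {a b : V} (hoff : S.switched a b) :
    S.lineFlow spec a b = 0 := by
  simp [lineFlow, hoff]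

theorem mkNet_abs_flow_le_cap (hsymm : ∀ a b, S.switched a b → S.switched b a)
    (hcap : ∀ a b c s, spec a b = some (c, s) → ¬ S.switched a b → |S.lineFlow spec a b| ≤ c)
    {a b : V} (hab : (mkNet spec pmin pmax gmax cost).adj a b) (hon : ¬ S.switched a b) :
    |(mkNet spec pmin pmax gmax cost).sus a b * (S.theta a - S.theta b)| ≤
      (mkNet spec pmin pmax gmax cost).cap a b := by
  have hon' : ¬ S.switched b a := mt (hsymm b a) hon
  rcases hline : spec a b with _ | ⟨c, s⟩
  · obtain ⟨⟨c, s⟩, hline'⟩ : ∃ line, spec b a = some line := by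
      simpa [mkNet, hline, Option.isSome_iff_exists] using hab
    have hle := hcap b a c s hline' hon'
    rw [S.lineFlow_of_eq_some hline' hon', abs_mul, abs_sub_comm, ← abs_mul] at hle
    simpa [mkNet, hline, hline'] using hle
  · have hle := hcap a b c s hline hon
    rw [S.lineFlow_of_eq_some hline hon] at hle
    simpa [mkNet, hline] using hle

theorem mkNet_flow_eq_lineFlow_sub (hsymm : ∀ a b, S.switched a b → S.switched b a) {a b : V}
    (hspec : spec a b = none ∨ spec b a = none) :
    (if (mkNet spec pmin pmax gmax cost).adj a b ∧ ¬ S.switched a b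
      then (mkNet spec pmin pmax gmax cost).sus a b * (S.theta a - S.theta b) else 0) =
      S.lineFlow spec a b - S.lineFlow spec b a := by
  by_cases hoff : S.switched a b
  · simp [hoff, S.lineFlow_of_switched hoff, S.lineFlow_of_switched (hsymm a b hoff)]
  have hoff' : ¬ S.switched b a := mt (hsymm b a) hoff
  rcases hspec with hnone | hnone
  · rcases hline : spec b a with _ | ⟨c, s⟩
    · simp [mkNet, hnone, hline, S.lineFlow_of_eq_none]
    · rw [S.lineFlow_of_eq_none hnone, S.lineFlow_of_eq_some hline hoff']
      simp [mkNet, hnone, hline, hoff, ← mul_neg]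
  · rcases hline : spec a b with _ | ⟨c, s⟩
    · simp [mkNet, hnone, hline, S.lineFlow_of_eq_none]
    · rw [S.lineFlow_of_eq_none hnone, S.lineFlow_of_eq_some hline hoff]
      simp [mkNet, hline, hoff]

end GeneralNetwork

section Assignment

variable {X Y Z : Type*} {A : Finset (X × Y × Z)}

theorem card_filter_memTriple_eq_three [Fintype X] [Fintype Y] [Fintype Z] (t : X × Y × Z) :
    (Finset.univ.filter (memTriple · t)).card = 3 := by
  obtain ⟨x, y, z⟩ := t
  refine Finset.card_eq_three.2
    ⟨.inl x, .inr (.inl y), .inr (.inr z), by simp, by simp, by simp, ?_⟩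
  ext (_ | _ | _) <;> rw [Finset.mem_filter_univ] <;> simp [memTriple]

theorem IsAssignment.card_filter_memTriple_eq_one (hA : IsAssignment A) (r : X ⊕ Y ⊕ Z) :
    (A.filter (memTriple r)).card = 1 := by
  obtain ⟨t, ht, huniq⟩ := hA r
  refine Finset.card_eq_one.2 ⟨t, ?_⟩
  ext t'
  simp only [Finset.mem_filter, Finset.mem_singleton]
  exact ⟨huniq t', fun h => h ▸ ht⟩

theorem IsAssignment.card_sum_eq_card_mul_three [Fintype X] [Fintype Y] [Fintype Z]
    (hA : IsAssignment A) : Fintype.card (X ⊕ Y ⊕ Z) = A.card * 3 := by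
  simpa only [mul_one, Finset.card_univ] using
    Finset.card_mul_eq_card_mul memTriple (s := Finset.univ) (t := A)
      (fun r _ => hA.card_filter_memTriple_eq_one r) (fun t _ => card_filter_memTriple_eq_three t)

end Assignment

section AssignmentNetwork

variable {X Y Z : Type*}

/-- The buses as a disjoint union, in the order `l`, `r`, `t`, `t_g`, `t_d`; it serves to split
sums over all buses. -/
def MBus.equivSum (X Y Z : Type*) :
    MBus X Y Z ≃ Unit ⊕ (X ⊕ Y ⊕ Z) ⊕ (X × Y × Z) ⊕ (X × Y × Z) ⊕ (X × Y × Z) where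
  toFun
    | .l => .inl ()
    | .r ρ => .inr (.inl ρ)
    | .t τ => .inr (.inr (.inl τ))
    | .tg τ => .inr (.inr (.inr (.inl τ)))
    | .td τ => .inr (.inr (.inr (.inr τ)))
  invFun
    | .inl _ => .l
    | .inr (.inl ρ) => .r ρ
    | .inr (.inr (.inl τ)) => .t τ
    | .inr (.inr (.inr (.inl τ))) => .tg τ
    | .inr (.inr (.inr (.inr τ))) => .td τ
  left_inv := by rintro (_ | _ | _ | _ | _) <;> rfl
  right_inv := by rintro (_ | _ | _ | _ | _) <;> rfl

theorem MBus.sum_univ [Fintype X] [Fintype Y] [Fintype Z] {M : Type*} [AddCommMonoid M]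
    (f : MBus X Y Z → M) :
    ∑ v, f v =
      f .l + (∑ r, f (.r r) + (∑ t, f (.t t) + (∑ t, f (.tg t) + ∑ t, f (.td t)))) := by
  rw [← (MBus.equivSum X Y Z).symm.sum_comp f]
  simp only [Fintype.sum_sum_type, Fintype.sum_unique]
  rfl

theorem assignSpec_eq_none_or (a b : MBus X Y Z) :
    assignSpec X Y Z a b = none ∨ assignSpec X Y Z b a = none := by
  cases a <;> cases b <;> simp [assignSpec]

/-- The flow from `a` to `b` that routes the generation to the load for the assignment `A`. Lines
are oriented as in `assignSpec`; the flow is negative on `{t, t_g}` because `assignSpec` orients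
this line from `t` to `t_g`. -/
noncomputable def assignmentFlow (A : Finset (X × Y × Z)) : MBus X Y Z → MBus X Y Z → ℝ
  | .r _, .l => 3 / 4
  | .t t, .tg t' => if t = t' then -3 else 0
  | .t t, .l => if t ∈ A then 15 / 4 else 3
  | .t t, .td t' => if t = t' then if t ∈ A then 9 / 4 else 0 else 0
  | .td t, .r r => if memTriple r t ∧ t ∈ A then 3 / 4 else 0
  | _, _ => 0

theorem abs_assignmentFlow_le_of_assignSpec_eq_some (A : Finset (X × Y × Z)) {a b : MBus X Y Z}
    {c s : ℝ} (hline : assignSpec X Y Z a b = some (c, s)) : |assignmentFlow A a b| ≤ c := by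
  unfold assignSpec at hline
  split at hline <;> (try split_ifs at hline) <;> cases hline <;> simp only [assignmentFlow] <;>
    grind

variable [Fintype X] [Fintype Y] [Fintype Z]

theorem sum_assignmentFlow_from_td (A : Finset (X × Y × Z)) (t : X × Y × Z) :
    ∑ r, assignmentFlow A (.td t) (.r r) = if t ∈ A then 9 / 4 else 0 := by
  by_cases ht : t ∈ A
  · simp only [assignmentFlow, ht, and_true, if_true, ← Finset.sum_filter, Finset.sum_const,
      card_filter_memTriple_eq_three]
    norm_num
  · simp [assignmentFlow, ht]

theorem IsAssignment.sum_assignmentFlow_to_r {A : Finset (X × Y × Z)} (hA : IsAssignment A)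
    (r : X ⊕ Y ⊕ Z) : ∑ t, assignmentFlow A (.td t) (.r r) = 3 / 4 := by
  have hfilter : Finset.univ.filter (fun t => memTriple r t ∧ t ∈ A) = A.filter (memTriple r) := by
    ext t
    simp [and_comm]
  simp only [assignmentFlow, ← Finset.sum_filter, hfilter, Finset.sum_const,
    hA.card_filter_memTriple_eq_one, one_smul]

theorem IsAssignment.sum_assignmentFlow_to_l {A : Finset (X × Y × Z)} (hA : IsAssignment A) :
    ∑ r, assignmentFlow A (.r r) .l + ∑ t, assignmentFlow A (.t t) .l =
      3 * Fintype.card (X × Y × Z) + Fintype.card (X ⊕ Y ⊕ Z) := by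
  have hcard : (Fintype.card (X ⊕ Y ⊕ Z) : ℝ) = A.card * 3 := mod_cast hA.card_sum_eq_card_mul_three
  have hr : ∑ r, assignmentFlow A (.r r) .l = Fintype.card (X ⊕ Y ⊕ Z) * (3 / 4) := by
    simp only [assignmentFlow, Finset.sum_const, Finset.card_univ, nsmul_eq_mul]
  have ht : ∑ t, assignmentFlow A (.t t) .l = Fintype.card (X × Y × Z) * 3 + A.card * (3 / 4) := by
    calc ∑ t, assignmentFlow A (.t t) .l = ∑ t, (3 + if t ∈ A then 3 / 4 else 0) :=
          Finset.sum_congr rfl fun t _ => by simp only [assignmentFlow]; split_ifs <;> norm_num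
      _ = _ := by
        simp only [Finset.sum_add_distrib, Finset.sum_const, Finset.card_univ, nsmul_eq_mul,
          Finset.sum_ite_mem, Finset.univ_inter]
  linarith

/-- The switching solution induced by `A`: exactly the lines `{t_d, r}` with `t ∉ A` are off, and
the angles realise `assignmentFlow A`. Undirected lines are compared as elements of `Sym2`. -/
noncomputable def assignmentSolution (A : Finset (X × Y × Z)) : LDCSolution (MBus X Y Z) where
  switched a b := ∃ t ∉ A, ∃ r, memTriple r t ∧ s(a, b) = s(.td t, .r r)
  theta
    | .l => 0
    | .r _ => 3 / 4
    | .t t => if t ∈ A then 15 / 4 else 3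
    | .tg t => if t ∈ A then 27 / 4 else 6
    | .td t => if t ∈ A then 3 / 2 else 3
  gen
    | .t t => if t ∈ A then 3 else 0
    | .tg _ => 3
    | _ => 0
  dem
    | .l => 3 * Fintype.card (X × Y × Z) + Fintype.card (X ⊕ Y ⊕ Z)
    | _ => 0

variable {A : Finset (X × Y × Z)} (δ : X × Y × Z → ℕ)

theorem assignmentSolution_switched_symm (a b : MBus X Y Z)
    (hoff : (assignmentSolution A).switched a b) : (assignmentSolution A).switched b a := by
  simpa only [assignmentSolution, Sym2.eq_swap (a := b)] using hoff

theorem assignNet_adj_of_assignmentSolution_switched (a b : MBus X Y Z)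
    (hoff : (assignmentSolution A).switched a b) : (assignNet X Y Z δ).adj a b := by
  obtain ⟨t, -, r, hr, hab⟩ := hoff
  rcases Sym2.eq_iff.1 hab with ⟨rfl, rfl⟩ | ⟨rfl, rfl⟩ <;>
    simp [assignNet, mkNet, assignSpec, hr]

theorem assignmentSolution_switched_td_r (t : X × Y × Z) (r : X ⊕ Y ⊕ Z) :
    (assignmentSolution A).switched (.td t) (.r r) ↔ memTriple r t ∧ t ∉ A := by
  simp only [assignmentSolution, Sym2.eq_iff, MBus.td.injEq, MBus.r.injEq, reduceCtorEq, and_self,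
    or_false]
  exact ⟨by rintro ⟨_, ht, _, hr, rfl, rfl⟩; exact ⟨hr, ht⟩,
    fun ⟨hr, ht⟩ => ⟨t, ht, r, hr, rfl, rfl⟩⟩

theorem assignmentSolution_lineFlow (a b : MBus X Y Z) :
    (assignmentSolution A).lineFlow (assignSpec X Y Z) a b = assignmentFlow A a b := by
  cases a <;> cases b
  case td.r t r =>
    simp only [LDCSolution.lineFlow, assignmentSolution_switched_td_r]
    simp only [assignmentSolution, assignSpec, assignmentFlow]
    grind
  case r.td => exact LDCSolution.lineFlow_of_eq_none rfl
  all_goals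
    simp only [LDCSolution.lineFlow, assignmentSolution, assignSpec, assignmentFlow, Sym2.eq_iff,
      reduceCtorEq, false_and, and_false, or_self, exists_false, if_false]
    grind

theorem assignmentSolution_abs_flow_le_cap (a b : MBus X Y Z)
    (hab : (assignNet X Y Z δ).adj a b) (hon : ¬ (assignmentSolution A).switched a b) :
    |(assignNet X Y Z δ).sus a b *
        ((assignmentSolution A).theta a - (assignmentSolution A).theta b)| ≤
      (assignNet X Y Z δ).cap a b := by
  refine mkNet_abs_flow_le_cap assignmentSolution_switched_symm (fun a b c s hline _ => ?_) hab hon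
  rw [assignmentSolution_lineFlow]
  exact abs_assignmentFlow_le_of_assignSpec_eq_some A hline

theorem IsAssignment.sum_assignmentFlow_sub (hA : IsAssignment A) (v : MBus X Y Z) :
    ∑ b, (assignmentFlow A v b - assignmentFlow A b v) =
      (assignmentSolution A).gen v - (assignmentSolution A).dem v := by
  rw [MBus.sum_univ]
  rcases v with _ | r | t | t | t
  case l =>
    have inflow := hA.sum_assignmentFlow_to_l
    simp only [assignmentFlow, assignmentSolution, zero_sub, sub_zero, Finset.sum_neg_distrib,
      Finset.sum_const_zero, add_zero, zero_add] at inflow ⊢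
    linarith
  case r =>
    have inflow := hA.sum_assignmentFlow_to_r r
    simp only [assignmentFlow, assignmentSolution, zero_sub, sub_zero, Finset.sum_neg_distrib,
      Finset.sum_const_zero, zero_add] at inflow ⊢
    linarith
  case t =>
    simp only [assignmentFlow, assignmentSolution, sub_zero, sub_self, zero_add,
      Finset.sum_const_zero, Finset.sum_ite_eq, Finset.mem_univ, if_true]
    grind
  case tg => simp [assignmentFlow, assignmentSolution]
  case td =>
    have outflow := sum_assignmentFlow_from_td A t
    simpa [assignmentFlow, assignmentSolution, -Fintype.sum_sum_type, add_neg_eq_zero] using outflow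

theorem IsAssignment.assignmentSolution_kirchhoff (hA : IsAssignment A) (v : MBus X Y Z) :
    (∑ b, if (assignNet X Y Z δ).adj v b ∧ ¬ (assignmentSolution A).switched v b
      then (assignNet X Y Z δ).sus v b *
        ((assignmentSolution A).theta v - (assignmentSolution A).theta b) else 0) =
      (assignmentSolution A).gen v - (assignmentSolution A).dem v := by
  rw [← hA.sum_assignmentFlow_sub v]
  refine Finset.sum_congr rfl fun b _ => ?_
  simp only [← assignmentSolution_lineFlow]
  exact mkNet_flow_eq_lineFlow_sub assignmentSolution_switched_symm (assignSpec_eq_none_or v b)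

theorem assignmentSolution_dem_bounds (v : MBus X Y Z) :
    (assignNet X Y Z δ).pmin v ≤ (assignmentSolution A).dem v ∧
      0 ≤ (assignmentSolution A).dem v ∧
      ENNReal.ofReal ((assignmentSolution A).dem v) ≤ (assignNet X Y Z δ).pmax v := by
  rcases v with _ | r | t | t | t
  · exact ⟨le_rfl, by simp only [assignmentSolution]; positivity, le_rfl⟩
  all_goals simp [assignNet, mkNet, assignmentSolution]

theorem assignmentSolution_gen_bounds (v : MBus X Y Z) :
    0 ≤ (assignmentSolution A).gen v ∧
      ENNReal.ofReal ((assignmentSolution A).gen v) ≤ (assignNet X Y Z δ).gmax v := by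
  rcases v with _ | r | t | t | t <;> simp only [assignNet, mkNet, assignmentSolution]
  case t => split_ifs <;> simp
  case tg => norm_num
  all_goals simp

theorem IsAssignment.isFeasible_assignmentSolution (hA : IsAssignment A) :
    (assignmentSolution A).IsFeasible (assignNet X Y Z δ) :=
  ⟨assignNet_adj_of_assignmentSolution_switched δ, assignmentSolution_switched_symm,
    assignmentSolution_abs_flow_le_cap δ, assignmentSolution_dem_bounds δ,
    assignmentSolution_gen_bounds δ, hA.assignmentSolution_kirchhoff δ⟩

theorem assignmentSolution_cost (A : Finset (X × Y × Z)) :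
    ∑ v, (assignNet X Y Z δ).cost v * (assignmentSolution A).gen v = ∑ t ∈ A, (δ t : ℝ) := by
  rw [MBus.sum_univ]
  simp [assignNet, mkNet, assignmentSolution]

end AssignmentNetwork

/-- For every assignment `A` of the minimum 3-dimensional assignment
instance `(X,Y,W,δ)` there is a feasible switching solution of `ANet(X,Y,W,δ)` whose
total generation cost equals the cost `∑ t ∈ A, δ t` of the assignment; in particular
`OTS(ANet(X,Y,W,δ)) ≤ M3DA(X,Y,W,δ)`. -/
theorem assignNet_ots_le_m3da (X Y Z : Type*) [Fintype X] [Fintype Y] [Fintype Z]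
    (hcard : Fintype.card X = Fintype.card Y ∧ Fintype.card Y = Fintype.card Z)
    (δ : X × Y × Z → ℕ) :
    (∀ A : Finset (X × Y × Z), IsAssignment A →
      ∃ S : LDCSolution (MBus X Y Z), S.IsFeasible (assignNet X Y Z δ) ∧
        ∑ v, (assignNet X Y Z δ).cost v * S.gen v = ∑ t ∈ A, (δ t : ℝ)) ∧
    (∀ ots m3da : ℝ,
      IsLeast {c : ℝ | ∃ S : LDCSolution (MBus X Y Z),
          S.IsFeasible (assignNet X Y Z δ) ∧
          c = ∑ v, (assignNet X Y Z δ).cost v * S.gen v} ots →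
      IsLeast {c : ℝ | ∃ A : Finset (X × Y × Z), IsAssignment A ∧
          c = ∑ t ∈ A, (δ t : ℝ)} m3da →
      ots ≤ m3da) := by
  have exists_solution (A : Finset (X × Y × Z)) (hA : IsAssignment A) :
      ∃ S : LDCSolution (MBus X Y Z), S.IsFeasible (assignNet X Y Z δ) ∧
        ∑ v, (assignNet X Y Z δ).cost v * S.gen v = ∑ t ∈ A, (δ t : ℝ) :=
    ⟨assignmentSolution A, hA.isFeasible_assignmentSolution δ, assignmentSolution_cost δ A⟩
  refine ⟨exists_solution, fun ots m3da hots hm3da => ?_⟩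
  obtain ⟨A, hA, rfl⟩ := hm3da.1
  obtain ⟨S, hS, hcost⟩ := exists_solution A hA
  exact hots.2 ⟨S, hS, hcost.symm⟩
end

section
/- Let G = (V, E) be a finite simple graph with distinguished vertices a = v₁ and b = vₙ, n = |V|, and let Net_h(G) be the LDC network obtained from the approximation network Net(G) by removing the buses g', l' and all lines incident to them, and removing the minimum-demand constraint at l (p⁻(l) = 0). Then MSF(Net_h(G)) = 2 if and only if G has a Hamiltonian path from a to b. -/
open scoped BigOperators ENNReal Classical

/-- Buses of the Hamiltonian-path network `Net_h(G)`: the vertices of `G` together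
with a generator `g` and a load `l`. -/
inductive HBus (V : Type*) where
  | vert : V → HBus V
  | g : HBus V
  | l : HBus V
  deriving DecidableEq, Fintype

/-- The lines of `Net_h(G)` where `a` and `b` are the distinguished vertices and
`n = |V|`: a line `({u,v}, 1, 1)` for every edge `{u,v}` of `G`, together with
`({g,a}, 1, 1)`, `({b,l}, 1, 1)` and `({g,l}, 1, 1/(n+1))`. -/
noncomputable def hamSpec {V : Type*} [Fintype V] (G : SimpleGraph V) (a b : V) :
    HBus V → HBus V → Option (ℝ × ℝ) := fun p q =>
  let n : ℝ := Fintype.card V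
  match p, q with
  | .vert u, .vert v => if G.Adj u v then some (1, 1) else none
  | .g, .vert v => if v = a then some (1, 1) else none
  | .vert v, .l => if v = b then some (1, 1) else none
  | .g, .l => some (1, 1 / (n + 1))
  | _, _ => none

/-- The network `Net_h(G)`: `g⁺(g) = ⊤`, `p⁺(l) = ⊤` and `p⁻(l) = 0`; all other
bounds are `0`. -/
noncomputable def hamNet {V : Type*} [Fintype V] (G : SimpleGraph V) (a b : V) :
    LDCNetwork (HBus V) :=
  mkNet (hamSpec G a b)
    (fun _ => 0)
    (fun p => match p with
      | .l => ⊤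
      | _ => 0)
    (fun p => match p with
      | .g => ⊤
      | _ => 0)
    (fun _ => 0)

/-!
The load `l` is fed only through the lines `{b,l}` and `{g,l}`, each of capacity `1`, so a demand of
`2` saturates both, which forces `θ b - θ l = 1` and `θ g - θ l = n + 1`. No vertex of `G` generates
or consumes, so the unit leaving the flow component of `b` towards `l` has to enter that component,
and it can do so only through `{g,a}`. Hence some path of live lines joins `a` to `b`, while
`θ a - θ b ≥ n - 1`; as the angle drops by at most `1` along each of its lines, the path has at
least `n - 1` lines and is Hamiltonian. Conversely, switching off all edges outside a Hamiltonian
path and letting the angle drop by `1` from each bus of `g, v₁, …, vₙ, l` to the next sends one unit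
along the path and one unit along `{g,l}`.
-/

section Antisymmetric

variable {ι M : Type*} [AddCommGroup M] [IsAddTorsionFree M] {φ : ι → ι → M}

theorem sum_sum_eq_zero_of_antisymm (hφ : ∀ i j, φ i j = -φ j i) (s : Finset ι) :
    ∑ i ∈ s, ∑ j ∈ s, φ i j = 0 := by
  rw [← self_eq_neg]
  calc ∑ i ∈ s, ∑ j ∈ s, φ i j = ∑ i ∈ s, ∑ j ∈ s, φ j i := Finset.sum_comm
    _ = ∑ i ∈ s, ∑ j ∈ s, -φ i j := by simp_rw [← hφ]
    _ = -∑ i ∈ s, ∑ j ∈ s, φ i j := by simp_rw [Finset.sum_neg_distrib]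

theorem sum_sum_univ_eq_sum_product_compl_of_antisymm [Fintype ι] [DecidableEq ι]
    (hφ : ∀ i j, φ i j = -φ j i) (s : Finset ι) :
    ∑ i ∈ s, ∑ j, φ i j = ∑ x ∈ s ×ˢ sᶜ, φ x.1 x.2 := by
  simp_rw [← Finset.sum_add_sum_compl s, Finset.sum_add_distrib,
    sum_sum_eq_zero_of_antisymm hφ, zero_add, Finset.sum_product]

end Antisymmetric

theorem walk_sub_le_length_nsmul {V M : Type*} [AddCommGroup M] [PartialOrder M]
    [IsOrderedAddMonoid M] {H : SimpleGraph V} {f : V → M} {c : M}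
    (hf : ∀ u v, H.Adj u v → f u - f v ≤ c) {u v : V} (p : H.Walk u v) :
    f u - f v ≤ p.length • c := by
  induction p with
  | nil => simp
  | @cons u v w huv p ih =>
    calc f u - f w = (f v - f w) + (f u - f v) := by abel
      _ ≤ p.length • c + c := add_le_add ih (hf u v huv)
      _ = (p.cons huv).length • c := by rw [SimpleGraph.Walk.length_cons, succ_nsmul]

/-- Symmetry of the data attached to lines. In the paper a line is an unordered pair of buses, but
`LDCNetwork` stores its data as functions of ordered pairs. -/
structure LDCNetwork.IsSymm {V : Type*} [Fintype V] (N : LDCNetwork V) : Prop where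
  adj_symm : ∀ {v w}, N.adj v w → N.adj w v
  cap_comm : ∀ v w, N.cap v w = N.cap w v
  sus_comm : ∀ v w, N.sus v w = N.sus w v

namespace LDCSolution

variable {V : Type*} [Fintype V] {N : LDCNetwork V} {S : LDCSolution V}

/-- The power flow from `v` to `w`, which is `0` unless `{v, w}` is a line that is not switched
off. -/
noncomputable def flow (S : LDCSolution V) (N : LDCNetwork V) (v w : V) : ℝ :=
  if N.adj v w ∧ ¬ S.switched v w then N.sus v w * (S.theta v - S.theta w) else 0

theorem adj_of_flow_ne_zero {v w : V} (h : S.flow N v w ≠ 0) : N.adj v w :=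
  (ite_ne_right_iff.mp h).1.1

theorem flow_eq_of_ne_zero {v w : V} (h : S.flow N v w ≠ 0) :
    S.flow N v w = N.sus v w * (S.theta v - S.theta w) :=
  if_pos (ite_ne_right_iff.mp h).1

/-- The graph of the lines carrying a nonzero flow. -/
def flowGraph (S : LDCSolution V) (N : LDCNetwork V) : SimpleGraph V :=
  SimpleGraph.fromRel fun v w => S.flow N v w ≠ 0

namespace IsFeasible

theorem flow_antisymm (hS : S.IsFeasible N) (hN : N.IsSymm) (v w : V) :
    S.flow N v w = -S.flow N w v := by
  have hadj : N.adj v w ↔ N.adj w v := ⟨hN.adj_symm, hN.adj_symm⟩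
  have hswitched : S.switched v w ↔ S.switched w v := ⟨hS.2.1 v w, hS.2.1 w v⟩
  simp only [flow, hadj, hswitched, hN.sus_comm v w]
  split_ifs <;> ring

theorem flowGraph_adj (hS : S.IsFeasible N) (hN : N.IsSymm) {v w : V} :
    (S.flowGraph N).Adj v w ↔ S.flow N v w ≠ 0 := by
  have hsymm : S.flow N w v ≠ 0 ↔ S.flow N v w ≠ 0 := by
    rw [hS.flow_antisymm hN w v, neg_ne_zero]
  rw [flowGraph, SimpleGraph.fromRel_adj, hsymm, or_self, and_iff_right_iff_imp]
  rintro h rfl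
  simp [flow] at h

theorem abs_flow_le_cap_of_ne_zero (hS : S.IsFeasible N) {v w : V} (h : S.flow N v w ≠ 0) :
    |S.flow N v w| ≤ N.cap v w := by
  obtain ⟨hadj, hswitched⟩ := (ite_ne_right_iff.mp h).1
  rw [flow_eq_of_ne_zero h]
  exact hS.2.2.1 v w hadj hswitched

theorem dem_eq_zero (hS : S.IsFeasible N) {v : V} (h : N.pmax v = 0) : S.dem v = 0 := by
  obtain ⟨-, hnonneg, hmax⟩ := hS.2.2.2.1 v
  rw [h, nonpos_iff_eq_zero, ENNReal.ofReal_eq_zero] at hmax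
  exact le_antisymm hmax hnonneg

theorem gen_eq_zero (hS : S.IsFeasible N) {v : V} (h : N.gmax v = 0) : S.gen v = 0 := by
  obtain ⟨hnonneg, hmax⟩ := hS.2.2.2.2.1 v
  rw [h, nonpos_iff_eq_zero, ENNReal.ofReal_eq_zero] at hmax
  exact le_antisymm hmax hnonneg

theorem sum_flow (hS : S.IsFeasible N) (v : V) : ∑ w, S.flow N v w = S.gen v - S.dem v :=
  hS.2.2.2.2.2 v

theorem sum_flow_product_compl (hS : S.IsFeasible N) (hN : N.IsSymm) (C : Finset V) :
    ∑ x ∈ C ×ˢ Cᶜ, S.flow N x.1 x.2 = ∑ v ∈ C, (S.gen v - S.dem v) := by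
  simp_rw [← hS.sum_flow]
  exact (sum_sum_univ_eq_sum_product_compl_of_antisymm (hS.flow_antisymm hN) C).symm

theorem exists_flow_pos_of_balanced (hS : S.IsFeasible N) (hN : N.IsSymm) {C : Finset V}
    (hC : ∀ v ∈ C, S.gen v = S.dem v) {v w : V} (hv : v ∈ C) (hw : w ∉ C)
    (hvw : S.flow N v w ≠ 0) : ∃ v' ∈ C, ∃ w' ∉ C, 0 < S.flow N w' v' := by
  have hinflow : ∑ x ∈ C ×ˢ Cᶜ, S.flow N x.2 x.1 = 0 := by
    simp_rw [fun x : V × V => hS.flow_antisymm hN x.2 x.1, Finset.sum_neg_distrib,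
      hS.sum_flow_product_compl hN, neg_eq_zero]
    exact Finset.sum_eq_zero fun v hv => sub_eq_zero.mpr (hC v hv)
  have hwv : S.flow N w v ≠ 0 := by rwa [hS.flow_antisymm hN w v, neg_ne_zero]
  obtain ⟨⟨v', w'⟩, hmem, hpos⟩ := Finset.exists_pos_of_sum_zero_of_exists_nonzero _ hinflow
    ⟨(v, w), Finset.mk_mem_product hv (Finset.mem_compl.mpr hw), hwv⟩
  obtain ⟨hv', hw'⟩ := Finset.mem_product.mp hmem
  exact ⟨v', hv', w', Finset.mem_compl.mp hw', hpos⟩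

end IsFeasible

end LDCSolution

section UnitCurrent

variable {V : Type*} [Fintype V] {N : LDCNetwork V} {F : V → V → Prop} {θ gen dem : V → ℝ}

/-- The switching solution with prescribed angles, generation and demand that keeps exactly the
lines of `N` on which the relation `F` holds in one of the two directions. It is used with angles
for which `F v w` means that one unit flows from `v` to `w`. -/
def unitCurrentSolution (N : LDCNetwork V) (F : V → V → Prop) (θ gen dem : V → ℝ) :
    LDCSolution V where
  switched v w := N.adj v w ∧ ¬ (F v w ∨ F w v)
  theta := θ
  gen := gen
  dem := dem

theorem unitCurrentSolution_flow (hN : N.IsSymm)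
    (hF : ∀ v w, F v w → N.adj v w ∧ N.sus v w * (θ v - θ w) = 1) (v w : V) :
    (unitCurrentSolution N F θ gen dem).flow N v w =
      (if F v w then 1 else 0) - (if F w v then 1 else 0) := by
  have hneg : N.sus w v * (θ w - θ v) = -(N.sus v w * (θ v - θ w)) := by
    rw [hN.sus_comm w v]; ring
  by_cases hvw : F v w
  · obtain ⟨hadj, hone⟩ := hF v w hvw
    have hwv : ¬ F w v := fun hwv => by linarith [(hF w v hwv).2]
    simp [LDCSolution.flow, unitCurrentSolution, hvw, hwv, hadj, hone]
  · by_cases hwv : F w v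
    · obtain ⟨hadj, hone⟩ := hF w v hwv
      have hone' : N.sus v w * (θ v - θ w) = -1 := by linarith
      simp [LDCSolution.flow, unitCurrentSolution, hvw, hwv, hN.adj_symm hadj, hone']
    · simp +contextual [LDCSolution.flow, unitCurrentSolution, hvw, hwv]

theorem unitCurrentSolution_isFeasible (hN : N.IsSymm)
    (hF : ∀ v w, F v w → N.adj v w ∧ N.sus v w * (θ v - θ w) = 1)
    (hcap : ∀ v w, F v w → 1 ≤ N.cap v w)
    (hdem : ∀ v, N.pmin v ≤ dem v ∧ 0 ≤ dem v ∧ ENNReal.ofReal (dem v) ≤ N.pmax v)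
    (hgen : ∀ v, 0 ≤ gen v ∧ ENNReal.ofReal (gen v) ≤ N.gmax v)
    (hbalance : ∀ v, (Finset.card {w | F v w} : ℝ) - Finset.card {w | F w v} = gen v - dem v) :
    (unitCurrentSolution N F θ gen dem).IsFeasible N := by
  refine ⟨fun v w h => h.1, fun v w h => ⟨hN.adj_symm h.1, fun h' => h.2 h'.symm⟩,
    fun v w hadj hkept => ?_, hdem, hgen, fun v => ?_⟩
  · have hkept : F v w ∨ F w v := by_contra fun h => hkept ⟨hadj, h⟩
    rcases hkept with hvw | hwv
    · change |N.sus v w * (θ v - θ w)| ≤ N.cap v w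
      rw [(hF v w hvw).2, abs_one]
      exact hcap v w hvw
    · change |N.sus v w * (θ v - θ w)| ≤ N.cap v w
      rw [hN.sus_comm, hN.cap_comm, ← abs_neg, ← mul_neg, neg_sub, (hF w v hwv).2, abs_one]
      exact hcap w v hwv
  · change ∑ w, (unitCurrentSolution N F θ gen dem).flow N v w = gen v - dem v
    simp_rw [unitCurrentSolution_flow hN hF, Finset.sum_sub_distrib, Finset.sum_boole]
    exact hbalance v

end UnitCurrent

section HamNet

variable {V : Type*} [Fintype V] {G : SimpleGraph V} {a b : V}

theorem hamNet_isSymm : (hamNet G a b).IsSymm where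
  adj_symm := Or.symm
  cap_comm := by
    rintro (u | _ | _) (v | _ | _) <;> simp [hamNet, mkNet, hamSpec, G.adj_comm]
  sus_comm := by
    rintro (u | _ | _) (v | _ | _) <;> simp [hamNet, mkNet, hamSpec, G.adj_comm]

theorem hamNet_adj_vert_vert {u v : V} :
    (hamNet G a b).adj (.vert u) (.vert v) ↔ G.Adj u v := by
  simp [hamNet, mkNet, hamSpec, G.adj_comm v u]

theorem hamNet_adj_g_vert {v : V} : (hamNet G a b).adj .g (.vert v) ↔ v = a := by
  simp [hamNet, mkNet, hamSpec]

theorem hamNet_adj_vert_l {v : V} : (hamNet G a b).adj (.vert v) .l ↔ v = b := by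
  simp [hamNet, mkNet, hamSpec]

theorem hamNet_adj_g_l : (hamNet G a b).adj .g .l := by
  simp [hamNet, mkNet, hamSpec]

theorem not_hamNet_adj_self (p : HBus V) : ¬ (hamNet G a b).adj p p := by
  rcases p with u | _ | _ <;> simp [hamNet, mkNet, hamSpec]

theorem hamNet_cap_of_adj {p q : HBus V} (h : (hamNet G a b).adj p q) :
    (hamNet G a b).cap p q = 1 := by
  rcases p with u | _ | _ <;> rcases q with v | _ | _ <;>
    simp_all [hamNet, mkNet, hamSpec, G.adj_comm]

theorem hamNet_sus_vert_of_adj {u : V} {q : HBus V} (h : (hamNet G a b).adj (.vert u) q) :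
    (hamNet G a b).sus (.vert u) q = 1 := by
  rcases q with v | _ | _ <;> simp_all [hamNet, mkNet, hamSpec, G.adj_comm]

theorem hamNet_sus_of_adj_vert {p : HBus V} {v : V} (h : (hamNet G a b).adj p (.vert v)) :
    (hamNet G a b).sus p (.vert v) = 1 := by
  rw [hamNet_isSymm.sus_comm]
  exact hamNet_sus_vert_of_adj (hamNet_isSymm.adj_symm h)

theorem hamNet_sus_g_l : (hamNet G a b).sus .g .l = 1 / ((Fintype.card V : ℝ) + 1) := by
  simp [hamNet, mkNet, hamSpec]

theorem hamNet_pmax_of_ne_l {p : HBus V} (hp : p ≠ .l) : (hamNet G a b).pmax p = 0 := by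
  rcases p with u | _ | _ <;> trivial

theorem hamNet_gmax_of_ne_g {p : HBus V} (hp : p ≠ .g) : (hamNet G a b).gmax p = 0 := by
  rcases p with u | _ | _ <;> trivial

variable {S : LDCSolution (HBus V)}

theorem hamNet_abs_flow_le_one (hS : S.IsFeasible (hamNet G a b)) (p q : HBus V) :
    |S.flow (hamNet G a b) p q| ≤ 1 := by
  by_cases h : S.flow (hamNet G a b) p q = 0
  · simp [h]
  · exact (hS.abs_flow_le_cap_of_ne_zero h).trans_eq
      (hamNet_cap_of_adj (LDCSolution.adj_of_flow_ne_zero h))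

theorem hamNet_sum_dem_eq (hS : S.IsFeasible (hamNet G a b)) :
    ∑ p, S.dem p = S.flow (hamNet G a b) (.vert b) .l + S.flow (hamNet G a b) .g .l := by
  have hinflow : S.dem .l = ∑ p, S.flow (hamNet G a b) p .l := by
    simp_rw [hS.flow_antisymm hamNet_isSymm _ .l, Finset.sum_neg_distrib, hS.sum_flow,
      hS.gen_eq_zero (hamNet_gmax_of_ne_g (p := .l) (by simp)), zero_sub, neg_neg]
  rw [Fintype.sum_eq_single .l fun p hp => hS.dem_eq_zero (hamNet_pmax_of_ne_l hp), hinflow]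
  refine Fintype.sum_eq_add _ _ (by simp) fun p hp => ?_
  by_contra h
  have hadj := LDCSolution.adj_of_flow_ne_zero h
  rcases p with v | _ | _
  · exact hp.1 (congrArg HBus.vert (hamNet_adj_vert_l.mp hadj))
  · exact hp.2 rfl
  · exact not_hamNet_adj_self _ hadj

theorem hamNet_sum_dem_le_two (hS : S.IsFeasible (hamNet G a b)) : ∑ p, S.dem p ≤ 2 := by
  rw [hamNet_sum_dem_eq hS]
  linarith [le_of_abs_le (hamNet_abs_flow_le_one hS (.vert b) .l),
    le_of_abs_le (hamNet_abs_flow_le_one hS .g .l)]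

theorem hamNet_flow_l_eq_one_of_sum_dem_eq_two (hS : S.IsFeasible (hamNet G a b))
    (h : ∑ p, S.dem p = 2) :
    S.flow (hamNet G a b) (.vert b) .l = 1 ∧ S.flow (hamNet G a b) .g .l = 1 := by
  rw [hamNet_sum_dem_eq hS] at h
  have hb := le_of_abs_le (hamNet_abs_flow_le_one hS (.vert b) .l)
  have hg := le_of_abs_le (hamNet_abs_flow_le_one hS .g .l)
  constructor <;> linarith

/-- The subgraph of `G` formed by the edges that carry a nonzero flow. -/
noncomputable def hamFlowGraph (G : SimpleGraph V) (a b : V) (S : LDCSolution (HBus V)) :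
    SimpleGraph V :=
  (S.flowGraph (hamNet G a b)).comap HBus.vert

theorem hamFlowGraph_adj (hS : S.IsFeasible (hamNet G a b)) {u v : V} :
    (hamFlowGraph G a b S).Adj u v ↔ S.flow (hamNet G a b) (.vert u) (.vert v) ≠ 0 :=
  hS.flowGraph_adj hamNet_isSymm

theorem hamFlowGraph_le (hS : S.IsFeasible (hamNet G a b)) : hamFlowGraph G a b S ≤ G :=
  fun _ _ h => hamNet_adj_vert_vert.mp
    (LDCSolution.adj_of_flow_ne_zero ((hamFlowGraph_adj hS).mp h))

theorem hamNet_theta_sub_le_one (hS : S.IsFeasible (hamNet G a b)) {v : V} {p : HBus V}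
    (h : S.flow (hamNet G a b) p (.vert v) ≠ 0) : S.theta p - S.theta (.vert v) ≤ 1 := by
  have hsus := hamNet_sus_of_adj_vert (LDCSolution.adj_of_flow_ne_zero h)
  calc S.theta p - S.theta (.vert v) = S.flow (hamNet G a b) p (.vert v) := by
        rw [LDCSolution.flow_eq_of_ne_zero h, hsus, one_mul]
    _ ≤ 1 := le_of_abs_le (hamNet_abs_flow_le_one hS p _)

theorem hamFlowGraph_reachable_and_flow_ne_zero (hS : S.IsFeasible (hamNet G a b))
    (hbl : 0 < S.flow (hamNet G a b) (.vert b) .l) :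
    (hamFlowGraph G a b S).Reachable b a ∧ S.flow (hamNet G a b) .g (.vert a) ≠ 0 := by
  let C : Finset (HBus V) :=
    ({v | (hamFlowGraph G a b S).Reachable b v} : Finset V).image HBus.vert
  have hvert : ∀ v, HBus.vert v ∈ C ↔ (hamFlowGraph G a b S).Reachable b v := by simp [C]
  have hbalanced : ∀ p ∈ C, S.gen p = S.dem p := by
    intro p hp
    obtain ⟨v, -, rfl⟩ := Finset.mem_image.mp hp
    exact (hS.gen_eq_zero (hamNet_gmax_of_ne_g (by simp))).trans
      (hS.dem_eq_zero (hamNet_pmax_of_ne_l (by simp))).symm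
  obtain ⟨p, hp, q, hq, hpos⟩ := hS.exists_flow_pos_of_balanced hamNet_isSymm hbalanced
    ((hvert b).mpr .rfl) (w := .l) (by simp [C]) hbl.ne'
  obtain ⟨v, -, rfl⟩ := Finset.mem_image.mp hp
  have hv := (hvert v).mp hp
  have hadj := LDCSolution.adj_of_flow_ne_zero hpos.ne'
  rcases q with w | _ | _
  · have hwv := (hamFlowGraph_adj hS).mpr hpos.ne'
    exact absurd ((hvert w).mpr (hv.trans hwv.symm.reachable)) hq
  · obtain rfl := hamNet_adj_g_vert.mp hadj
    exact ⟨hv, hpos.ne'⟩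
  · obtain rfl := hamNet_adj_vert_l.mp (hamNet_isSymm.adj_symm hadj)
    rw [hS.flow_antisymm hamNet_isSymm] at hpos
    exact absurd (neg_pos.mp hpos) hbl.not_gt

theorem card_sub_one_le_theta_sub (hS : S.IsFeasible (hamNet G a b))
    (hbl : S.flow (hamNet G a b) (.vert b) .l = 1) (hgl : S.flow (hamNet G a b) .g .l = 1)
    (hga : S.flow (hamNet G a b) .g (.vert a) ≠ 0) :
    (Fintype.card V : ℝ) - 1 ≤ S.theta (.vert a) - S.theta (.vert b) := by
  have hθb : S.theta (.vert b) - S.theta .l = 1 := by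
    rw [← hbl, LDCSolution.flow_eq_of_ne_zero (by simp [hbl]),
      hamNet_sus_vert_of_adj (hamNet_adj_vert_l.mpr rfl), one_mul]
  have hθg : S.theta .g - S.theta .l = Fintype.card V + 1 := by
    rw [LDCSolution.flow_eq_of_ne_zero (by simp [hgl]), hamNet_sus_g_l] at hgl
    field_simp at hgl
    exact hgl
  have hθa := hamNet_theta_sub_le_one hS hga
  linarith

theorem exists_isHamiltonian_of_sum_dem_eq_two (hS : S.IsFeasible (hamNet G a b))
    (h : ∑ p, S.dem p = 2) : ∃ p : G.Walk a b, p.IsHamiltonian := by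
  obtain ⟨hbl, hgl⟩ := hamNet_flow_l_eq_one_of_sum_dem_eq_two hS h
  obtain ⟨hreach, hga⟩ := hamFlowGraph_reachable_and_flow_ne_zero hS (by simp [hbl])
  obtain ⟨p, hp⟩ := hreach.symm.exists_isPath
  have hdrop : S.theta (.vert a) - S.theta (.vert b) ≤ p.length • (1 : ℝ) :=
    walk_sub_le_length_nsmul (f := fun v => S.theta (.vert v))
      (fun u v huv => hamNet_theta_sub_le_one hS ((hamFlowGraph_adj hS).mp huv)) p
  have hlong : Fintype.card V ≤ p.length + 1 := by
    have := card_sub_one_le_theta_sub hS hbl hgl hga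
    rw [nsmul_one] at hdrop
    exact_mod_cast (by linarith : (Fintype.card V : ℝ) ≤ p.length + 1)
  have hlt := hp.length_lt
  refine ⟨p.mapLe (hamFlowGraph_le hS), ?_⟩
  rw [SimpleGraph.Walk.isHamiltonian_iff_isPath_and_length_eq]
  exact ⟨hp.mapLe _, by rw [SimpleGraph.Walk.length_map]; omega⟩

end HamNet

/-- An enumeration of all vertices of `G` from `a` to `b` with consecutive vertices adjacent, i.e. a
Hamiltonian path given by its sequence of vertices. -/
structure IsHamiltonianEnumeration {V : Type*} [Fintype V] (G : SimpleGraph V) (a b : V)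
    (τ : Fin (Fintype.card V) → V) : Prop where
  bijective : Function.Bijective τ
  first : ∀ i : Fin (Fintype.card V), (i : ℕ) = 0 → τ i = a
  last : ∀ i : Fin (Fintype.card V), (i : ℕ) = Fintype.card V - 1 → τ i = b
  adj : ∀ i j : Fin (Fintype.card V), (j : ℕ) = (i : ℕ) + 1 → G.Adj (τ i) (τ j)

theorem isHamiltonianEnumeration_getVert {V : Type*} [Fintype V] {G : SimpleGraph V} {a b : V}
    {p : G.Walk a b} (hp : p.IsHamiltonian) :
    IsHamiltonianEnumeration G a b fun i => p.getVert i where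
  bijective := ((finCongr hp.length_support.symm).trans hp.getVertEquiv).bijective
  first i hi := by rw [hi, p.getVert_zero]
  last i hi := by rw [hi, ← hp.length_eq, p.getVert_length]
  adj i j hij := by
    rw [hij]
    exact p.adj_getVert_succ (by have := hp.length_eq; omega)

namespace HBus

variable {V : Type*} {m : ℕ} (σ : V ≃ Fin m)

/-- The position of a bus in the sequence `g, σ⁻¹ 0, …, σ⁻¹ (m - 1), l`, starting from `0`. -/
def rank : HBus V → ℕ
  | g => 0
  | vert v => σ v + 1
  | l => m + 1

@[simp] theorem rank_g : rank σ g = 0 := rfl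

@[simp] theorem rank_vert (v : V) : rank σ (vert v) = σ v + 1 := rfl

@[simp] theorem rank_l : rank σ l = m + 1 := rfl

theorem rank_injective : Function.Injective (rank σ) := by
  rintro (u | _ | _) (v | _ | _) h <;>
    simp only [rank_g, rank_vert, rank_l, Nat.add_right_cancel_iff] at h
  · rw [σ.injective (Fin.ext h)]
  all_goals first | rfl | omega

theorem rank_le (p : HBus V) : rank σ p ≤ m + 1 := by
  rcases p with v | _ | _ <;> simp only [rank_g, rank_vert, rank_l] <;> omega

theorem exists_rank_eq {k : ℕ} (hk : k ≤ m + 1) : ∃ p, rank σ p = k := by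
  rcases k with _ | k
  · exact ⟨g, rfl⟩
  · rcases Nat.lt_or_ge k m with hkm | hkm
    · exact ⟨vert (σ.symm ⟨k, hkm⟩), by simp⟩
    · exact ⟨l, by rw [rank_l]; omega⟩

/-- `UnitCurrent σ p q` means that one unit flows from `p` to `q` in the solution that sends one
unit along the sequence `g, σ⁻¹ 0, …, σ⁻¹ (m - 1), l` and one along the line `{g, l}`. -/
def UnitCurrent (p q : HBus V) : Prop :=
  rank σ q = rank σ p + 1 ∨ p = g ∧ q = l

variable [Fintype V]

theorem card_filter_rank_eq {k : ℕ} (hk : k ≤ m + 1) :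
    Finset.card {p | rank σ p = k} = 1 := by
  obtain ⟨p, rfl⟩ := exists_rank_eq σ hk
  simp [(rank_injective σ).eq_iff, Finset.filter_eq']

theorem card_unitCurrent_out (hm : 0 < m) (p : HBus V) :
    Finset.card {q | UnitCurrent σ p q} = match p with | vert _ => 1 | g => 2 | l => 0 := by
  rcases p with v | _ | _
  · rw [← card_filter_rank_eq σ (k := σ v + 2) (by omega)]
    simp [UnitCurrent]
  · have hout : ({q | UnitCurrent σ g q} : Finset (HBus V)) =
        insert l ({q | rank σ q = 1} : Finset (HBus V)) := by
      ext q; simp [UnitCurrent, or_comm]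
    rw [hout, Finset.card_insert_of_notMem (by simp [hm.ne']),
      card_filter_rank_eq σ (by omega)]
  · have hout (q : HBus V) : ¬ UnitCurrent σ l q := by
      have := rank_le σ q
      simp only [UnitCurrent, rank_l, reduceCtorEq, false_and, or_false]
      omega
    simp [hout]

theorem card_unitCurrent_in (hm : 0 < m) (p : HBus V) :
    Finset.card {q | UnitCurrent σ q p} = match p with | vert _ => 1 | g => 0 | l => 2 := by
  rcases p with v | _ | _
  · rw [← card_filter_rank_eq σ (k := σ v) (by omega)]
    simp [UnitCurrent, eq_comm]
  · simp [UnitCurrent]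
  · have hin : ({q | UnitCurrent σ q l} : Finset (HBus V)) =
        insert g ({q | rank σ q = m} : Finset (HBus V)) := by
      ext q; simp [UnitCurrent, or_comm, eq_comm]
    rw [hin, Finset.card_insert_of_notMem (by simp [hm.ne]),
      card_filter_rank_eq σ (by omega)]

end HBus

namespace IsHamiltonianEnumeration

variable {V : Type*} [Fintype V] {G : SimpleGraph V} {a b : V} {τ : Fin (Fintype.card V) → V}

/-- The position of a vertex in the enumeration, counted from `0`. -/
noncomputable def position (hτ : IsHamiltonianEnumeration G a b τ) : V ≃ Fin (Fintype.card V) :=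
  (Equiv.ofBijective τ hτ.bijective).symm

theorem apply_position (hτ : IsHamiltonianEnumeration G a b τ) (v : V) : τ (hτ.position v) = v :=
  (Equiv.ofBijective τ hτ.bijective).apply_symm_apply v

theorem hamNet_adj_and_sus_eq_one_of_rank_eq (hτ : IsHamiltonianEnumeration G a b τ)
    {p q : HBus V} (hpq : q.rank hτ.position = p.rank hτ.position + 1) :
    (hamNet G a b).adj p q ∧ (hamNet G a b).sus p q = 1 := by
  have hcard : 0 < Fintype.card V := Fintype.card_pos_iff.mpr ⟨a⟩
  rcases p with u | _ | _ <;> rcases q with v | _ | _ <;>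
    simp only [HBus.rank_g, HBus.rank_vert, HBus.rank_l] at hpq
  · have hadj : (hamNet G a b).adj (.vert u) (.vert v) := hamNet_adj_vert_vert.mpr <| by
      rw [← hτ.apply_position u, ← hτ.apply_position v]
      exact hτ.adj _ _ (by omega)
    exact ⟨hadj, hamNet_sus_vert_of_adj hadj⟩
  · omega
  · have hadj : (hamNet G a b).adj (.vert u) .l := hamNet_adj_vert_l.mpr <| by
      rw [← hτ.apply_position u]
      exact hτ.last _ (by omega)
    exact ⟨hadj, hamNet_sus_vert_of_adj hadj⟩
  · have hadj : (hamNet G a b).adj .g (.vert v) := hamNet_adj_g_vert.mpr <| by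
      rw [← hτ.apply_position v]
      exact hτ.first _ (by omega)
    exact ⟨hadj, hamNet_sus_of_adj_vert hadj⟩
  all_goals omega

theorem hamNet_adj_and_drop_eq_one (hτ : IsHamiltonianEnumeration G a b τ) {p q : HBus V}
    (hpq : HBus.UnitCurrent hτ.position p q) :
    (hamNet G a b).adj p q ∧ (hamNet G a b).sus p q *
      (-(p.rank hτ.position : ℝ) - -(q.rank hτ.position : ℝ)) = 1 := by
  rcases hpq with hpq | ⟨rfl, rfl⟩
  · obtain ⟨hadj, hsus⟩ := hτ.hamNet_adj_and_sus_eq_one_of_rank_eq hpq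
    refine ⟨hadj, ?_⟩
    rw [hsus, hpq]
    push_cast
    ring
  · refine ⟨hamNet_adj_g_l, ?_⟩
    rw [hamNet_sus_g_l, HBus.rank_g, HBus.rank_l]
    push_cast
    field_simp
    ring

theorem exists_isFeasible_sum_dem_eq_two (hτ : IsHamiltonianEnumeration G a b τ) :
    ∃ S : LDCSolution (HBus V), S.IsFeasible (hamNet G a b) ∧ ∑ p, S.dem p = 2 := by
  have hcard : 0 < Fintype.card V := Fintype.card_pos_iff.mpr ⟨a⟩
  refine ⟨unitCurrentSolution (hamNet G a b) (HBus.UnitCurrent hτ.position)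
      (fun p => -(p.rank hτ.position : ℝ))
      (fun p => match p with | .g => 2 | _ => 0) (fun p => match p with | .l => 2 | _ => 0),
    unitCurrentSolution_isFeasible hamNet_isSymm (fun p q => hτ.hamNet_adj_and_drop_eq_one)
      (fun p q hpq => (hamNet_cap_of_adj (hτ.hamNet_adj_and_drop_eq_one hpq).1).ge)
      ?_ ?_ fun p => ?_, ?_⟩
  · rintro (_ | _ | _) <;> simp [hamNet, mkNet]
  · rintro (_ | _ | _) <;> simp [hamNet, mkNet]
  · rw [HBus.card_unitCurrent_out _ hcard, HBus.card_unitCurrent_in _ hcard]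
    rcases p with _ | _ | _ <;> norm_num
  · exact Fintype.sum_eq_single HBus.l fun p hp => by rcases p with _ | _ | _ <;> trivial

end IsHamiltonianEnumeration

/-- The maximum switching flow of `Net_h(G)` equals `2` iff `G` has
a Hamiltonian path from `a` to `b` (an enumeration `τ` of all vertices, starting at
`a`, ending at `b`, with consecutive vertices adjacent). -/
theorem hamNet_msf_eq_two_iff_hamiltonianPath (V : Type*) [Fintype V]
    (G : SimpleGraph V) (a b : V) (hab : a ≠ b) :
    IsGreatest
        {s : ℝ | ∃ S : LDCSolution (HBus V), S.IsFeasible (hamNet G a b) ∧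
          s = ∑ v, S.dem v} 2 ↔
      ∃ τ : Fin (Fintype.card V) → V, Function.Bijective τ ∧
        (∀ i : Fin (Fintype.card V), (i : ℕ) = 0 → τ i = a) ∧
        (∀ i : Fin (Fintype.card V), (i : ℕ) = Fintype.card V - 1 → τ i = b) ∧
        (∀ i j : Fin (Fintype.card V), (j : ℕ) = (i : ℕ) + 1 → G.Adj (τ i) (τ j)) := by
  constructor
  · rintro ⟨⟨S, hS, hdem⟩, -⟩
    obtain ⟨p, hp⟩ := exists_isHamiltonian_of_sum_dem_eq_two hS hdem.symm
    obtain ⟨hbij, hfirst, hlast, hadj⟩ := isHamiltonianEnumeration_getVert hp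
    exact ⟨_, hbij, hfirst, hlast, hadj⟩
  · rintro ⟨τ, hbij, hfirst, hlast, hadj⟩
    have hτ : IsHamiltonianEnumeration G a b τ := ⟨hbij, hfirst, hlast, hadj⟩
    obtain ⟨S, hS, hdem⟩ := hτ.exists_isFeasible_sum_dem_eq_two
    refine ⟨⟨S, hS, hdem.symm⟩, ?_⟩
    rintro _ ⟨S', hS', rfl⟩
    exact hamNet_sum_dem_le_two hS'
end
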